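/- For every k ≥ 1 and n ≥ 4, γ_{[k]R}(C_4 □ P_n) ≤ 4(n−2)·⌈(k+5)/5⌉ + 8·⌈(k+3−⌈(k+5)/5⌉)/3⌉ − ⌈2n/3⌉ ≤ (12nk + 8k + 110n − 40)/15. -/

import Mathlib

open SimpleGraph Finset
open scoped Classical

/-- Closed neighborhood of a vertex. -/
def closedNbr {V : Type*} (G : SimpleGraph V) (v : V) : Set V :=
  insert v (G.neighborSet v)

/-- `S` is an efficient dominating set: every vertex lies in the closed
neighborhood of exactly one vertex of `S`. -/
def IsEffDomSet {V : Type*} (G : SimpleGraph V) (S : Set V) : Prop :=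
  ∀ v : V, ∃! u, u ∈ S ∧ v ∈ closedNbr G u

/-- `S` is a dominating set. -/
def IsDomSet {V : Type*} (G : SimpleGraph V) (S : Set V) : Prop :=
  ∀ v : V, v ∉ S → ∃ u ∈ S, G.Adj u v

/-- The domination number. -/
noncomputable def domNumber {V : Type*} (G : SimpleGraph V) [Fintype V] : ℕ :=
  sInf {n | ∃ S : Set V, IsDomSet G S ∧ S.ncard = n}

/-- `f` is a `[k]`-Roman dominating function on `G`. -/
noncomputable def IsKRDF {V : Type*} (G : SimpleGraph V) [Fintype V] (k : ℕ) (f : V → ℕ) : Prop :=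
  (∀ v, f v ≤ k + 1) ∧
  ∀ v : V, f v < k →
    f v + ∑ u ∈ univ.filter (fun u => G.Adj v u), f u ≥
      k + (univ.filter (fun u => G.Adj v u ∧ 0 < f u)).card

/-- The `[k]`-Roman domination number. -/
noncomputable def kRoman {V : Type*} (G : SimpleGraph V) [Fintype V] (k : ℕ) : ℕ :=
  sInf {w | ∃ f : V → ℕ, IsKRDF G k f ∧ ∑ v, f v = w}

/-- `S` is a packing: closed neighborhoods of vertices in `S` are pairwise disjoint. -/
def IsPacking {V : Type*} (G : SimpleGraph V) (S : Set V) : Prop :=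
  S.Pairwise fun u v => Disjoint (closedNbr G u) (closedNbr G v)

/-- The packing number. -/
noncomputable def packingNumber {V : Type*} (G : SimpleGraph V) [Fintype V] : ℕ :=
  sSup {n | ∃ S : Set V, IsPacking G S ∧ S.ncard = n}

/-! A weight `f` is `[k]`-Roman dominating as soon as its net weight
`f(N[v]) - |{u ∈ N(v) : f(u) > 0}|` is at least `k` at every `v` (values above `k + 1` may be
capped). If moreover `S` is a packing and the net weight is at least `k + 1` on the closed
neighborhoods of the vertices of `S`, then one unit can be removed at each vertex of `S`, because no
vertex notices more than one of the removals.

Put `a = ⌈(k+5)/5⌉` on the inner columns of `C₄ □ Pₙ` and `b = ⌈(k+3-a)/3⌉` on the two extremal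
ones. Where the weight is constant, the net weight is `5a - 4 ≥ k + 1`, so one unit can be removed
along a packing in the inner columns. An extremal vertex only has net weight `3b + a - 3 ≥ k`, so
near the ends the weight is tapered instead, which saves two units at each end. For `n ≥ 6` the
savings add up to `⌈2n/3⌉`.

Tapering needs `k + 6 ≤ 4a + b`. The small `k` violating this are covered by the weight `k + 1` on a
dominating set with one vertex per column. The cases `n = 4` and `n = 5` have their own tapered
weights, except that `n = 5`, `k = 20` is settled by a weight with zeros in four of the columns. -/

section NetWeight

variable {V : Type*} {G : SimpleGraph V} [Fintype V] {k : ℕ}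

/-- The quantity `f(N[v]) - |{u ∈ N(v) : f(u) > 0}|` of the `[k]`-Roman condition. The truncated
`f u - 1` lets a neighbour of weight `0` contribute `0`, so no case distinction is needed. -/
noncomputable def netWeight (G : SimpleGraph V) (f : V → ℕ) (v : V) : ℕ :=
  f v + ∑ u ∈ G.neighborFinset v, (f u - 1)

lemma pred_le_netWeight_of_adj {u v : V} (f : V → ℕ) (h : G.Adj v u) :
    f u - 1 ≤ netWeight G f v :=
  (single_le_sum (f := fun u => f u - 1) (fun _ _ => Nat.zero_le _)
    ((mem_neighborFinset G v u).2 h)).trans (Nat.le_add_left _ _)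

lemma netWeight_add_card_pos_adj (f : V → ℕ) (v : V) :
    netWeight G f v + #{u | G.Adj v u ∧ 0 < f u} = f v + ∑ u with G.Adj v u, f u := by
  rw [netWeight, neighborFinset_eq_filter, ← filter_filter, card_filter, add_assoc,
    ← sum_add_distrib]
  congr 1
  refine sum_congr rfl fun u _ => ?_
  split_ifs <;> omega

lemma isKRDF_of_le_netWeight {f : V → ℕ} (hf : ∀ v, f v ≤ k + 1)
    (hk : ∀ v, k ≤ netWeight G f v) : IsKRDF G k f := by
  refine ⟨hf, fun v _ => ?_⟩
  rw [← netWeight_add_card_pos_adj]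
  exact Nat.add_le_add_right (hk v) _

/-- Capping `f` at `k + 1` preserves the condition: a single weight of at least `k + 1` in the
closed neighborhood of `v` already suffices for `v`. -/
lemma le_netWeight_min {f : V → ℕ} {v : V} (h : k ≤ netWeight G f v) :
    k ≤ netWeight G (fun u => min (f u) (k + 1)) v := by
  by_cases hv : k ≤ f v
  · exact (le_min hv k.le_succ).trans (Nat.le_add_right _ _)
  by_cases hu : ∃ u, G.Adj v u ∧ k < f u
  · obtain ⟨u, huv, hu⟩ := hu
    have hmin : k ≤ min (f u) (k + 1) - 1 := by omega
    exact hmin.trans (pred_le_netWeight_of_adj (fun u => min (f u) (k + 1)) huv)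
  · push Not at hv hu
    refine h.trans_eq (congr_arg₂ (· + ·) (min_eq_left (by omega)).symm
      (sum_congr rfl fun u huv => ?_))
    have := hu u ((mem_neighborFinset G v u).1 huv)
    dsimp only
    omega

theorem kRoman_le_sum_of_le_netWeight {f : V → ℕ} (hf : ∀ v, k ≤ netWeight G f v) :
    kRoman G k ≤ ∑ v, f v :=
  calc
    kRoman G k ≤ ∑ v, min (f v) (k + 1) :=
      Nat.sInf_le ⟨_, isKRDF_of_le_netWeight (fun _ => min_le_right _ _)
        fun v => le_netWeight_min (hf v), rfl⟩
    _ ≤ ∑ v, f v := sum_le_sum fun _ _ => min_le_left _ _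

theorem kRoman_le_mul_ncard_of_isDomSet {S : Set V} (hS : IsDomSet G S) :
    kRoman G k ≤ (k + 1) * S.ncard := by
  have h : kRoman G k ≤ ∑ v, if v ∈ S then k + 1 else 0 := by
    refine kRoman_le_sum_of_le_netWeight fun v => ?_
    by_cases hv : v ∈ S
    · simp only [netWeight, if_pos hv]
      omega
    · obtain ⟨u, hu, huv⟩ := hS v hv
      simpa [hu] using pred_le_netWeight_of_adj (fun v => if v ∈ S then k + 1 else 0) huv.symm
  rwa [← sum_filter, sum_const, smul_eq_mul, mul_comm, ← Set.ncard_coe_finset, coe_filter_univ] at h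

lemma mem_insert_neighborFinset_iff_mem_closedNbr {u v : V} :
    u ∈ insert v (G.neighborFinset v) ↔ v ∈ closedNbr G u := by
  simp [closedNbr, adj_comm, eq_comm]

lemma IsPacking.card_filter_insert_neighborFinset_le_one {S : Set V} (hS : IsPacking G S) (v : V) :
    #{u ∈ insert v (G.neighborFinset v) | u ∈ S} ≤ 1 := by
  refine card_le_one.2 fun u hu u' hu' => ?_
  rw [mem_filter, mem_insert_neighborFinset_iff_mem_closedNbr] at hu hu'
  exact by_contra fun h => Set.disjoint_left.1 (hS hu.2 hu'.2 h) hu.1 hu'.1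

lemma netWeight_le_netWeight_sub_add_card (f : V → ℕ) (S : Set V) (v : V) :
    netWeight G f v ≤ netWeight G (fun u => f u - if u ∈ S then 1 else 0) v +
      #{u ∈ insert v (G.neighborFinset v) | u ∈ S} := by
  rw [card_filter, sum_insert (G.notMem_neighborFinset_self v), netWeight, netWeight,
    add_add_add_comm, ← sum_add_distrib]
  exact add_le_add (by omega) (sum_le_sum fun u _ => by omega)

theorem kRoman_add_ncard_le_sum_of_isPacking {S : Set V} (hS : IsPacking G S) {f : V → ℕ}
    (hpos : ∀ v ∈ S, 0 < f v) (hf : ∀ v, k ≤ netWeight G f v)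
    (hfS : ∀ u ∈ S, ∀ v ∈ closedNbr G u, k < netWeight G f v) :
    kRoman G k + S.ncard ≤ ∑ v, f v := by
  have hnet : ∀ v, k ≤ netWeight G (fun u => f u - if u ∈ S then 1 else 0) v := by
    intro v
    have hdrop := netWeight_le_netWeight_sub_add_card (G := G) f S v
    obtain h0 | h0 := Finset.eq_empty_or_nonempty {u ∈ insert v (G.neighborFinset v) | u ∈ S}
    · rw [h0, card_empty] at hdrop
      exact (hf v).trans hdrop
    · obtain ⟨u, hu⟩ := h0
      rw [mem_filter, mem_insert_neighborFinset_iff_mem_closedNbr] at hu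
      have := hfS u hu.2 v hu.1
      have := hS.card_filter_insert_neighborFinset_le_one v
      omega
  have hsum : ∑ v, (f v - if v ∈ S then 1 else 0) + S.ncard = ∑ v, f v := by
    have hcard : S.ncard = ∑ v, if v ∈ S then 1 else 0 := by
      rw [← card_filter, ← Set.ncard_coe_finset, coe_filter_univ, Set.ofPred_mem_eq]
    rw [hcard, ← sum_add_distrib]
    refine sum_congr rfl fun v _ => Nat.sub_add_cancel ?_
    split_ifs with hv
    exacts [hpos v hv, Nat.zero_le _]
  exact hsum ▸ Nat.add_le_add_right (kRoman_le_sum_of_le_netWeight hnet) _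

end NetWeight

section Neighbors

variable {M : Type*} [AddCommMonoid M]

lemma sum_neighborFinset_boxProd {α β : Type*} (G : SimpleGraph α) (H : SimpleGraph β)
    (g : α × β → M) (x : α × β) [Fintype (G.neighborSet x.1)] [Fintype (H.neighborSet x.2)]
    [Fintype ((G □ H).neighborSet x)] :
    ∑ u ∈ (G □ H).neighborFinset x, g u =
      ∑ a ∈ G.neighborFinset x.1, g (a, x.2) + ∑ b ∈ H.neighborFinset x.2, g (x.1, b) := by
  rw [neighborFinset_boxProd, sum_disjUnion, sum_product, sum_product, sum_singleton]
  simp only [sum_singleton]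

lemma sum_neighborFinset_cycleGraph {m : ℕ} (g : Fin (m + 3) → M) (r : Fin (m + 3))
    [Fintype ((cycleGraph (m + 3)).neighborSet r)] :
    ∑ s ∈ (cycleGraph (m + 3)).neighborFinset r, g s = g (r - 1) + g (r + 1) := by
  have hne : r - 1 ≠ r + 1 := by
    rw [Ne, sub_eq_iff_eq_add, add_assoc, left_eq_add]
    simp [Fin.ext_iff, Fin.val_add, Nat.mod_eq_of_lt]
  rw [← sum_pair hne]
  refine sum_congr (Finset.ext fun s => ?_) fun _ _ => rfl
  rw [mem_neighborFinset, ← mem_neighborSet, cycleGraph_neighborSet, ← mem_coe, coe_pair]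

lemma sum_neighborFinset_pathGraph {n : ℕ} (g : ℕ → M) (h0 : g 0 = 0) (hn : g (n + 1) = 0)
    (i : Fin n) [Fintype ((pathGraph n).neighborSet i)] :
    ∑ j ∈ (pathGraph n).neighborFinset i, g (j + 1) = g i + g (i + 2) := by
  have hinj : Set.InjOn (fun j : Fin n => (j : ℕ) + 1) ((pathGraph n).neighborFinset i) :=
    fun _ _ _ _ h => Fin.ext (Nat.succ.inj h)
  rw [← sum_image (f := g) hinj, ← sum_pair (by omega : (i : ℕ) ≠ i + 2)]
  refine sum_subset (fun x hx => ?_) fun x hx hx' => ?_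
  · obtain ⟨j, hj, rfl⟩ := mem_image.1 hx
    rw [mem_neighborFinset, pathGraph_adj] at hj
    rw [mem_insert, mem_singleton]
    omega
  · have hboundary : x = 0 ∨ x = n + 1 := by
      by_contra! hne
      rw [mem_insert, mem_singleton] at hx
      refine hx' (mem_image.2 ⟨⟨x - 1, by omega⟩, ?_, Nat.sub_add_cancel (by omega)⟩)
      rw [mem_neighborFinset, pathGraph_adj]
      simp only
      omega
    rcases hboundary with rfl | rfl
    exacts [h0, hn]

end Neighbors

section Columns

/-- The net weight in row `r` of the middle one of three consecutive columns `A`, `B`, `C` of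
`C₄ □ Pₙ`. -/
def columnNetWeight (A B C : Fin 4 → ℕ) (r : Fin 4) : ℕ :=
  B r + ((B (r - 1) - 1) + (B (r + 1) - 1) + ((A r - 1) + (C r - 1)))

/-- The weight on `C₄ □ Pₙ` whose `i`-th column is `F i`, for `1 ≤ i ≤ n`. Columns are counted from
`1` so that `F 0` and `F (n + 1)` can serve as the missing neighbours of the extremal columns. -/
def weightOfColumns (n : ℕ) (F : ℕ → Fin 4 → ℕ) (v : Fin 4 × Fin n) : ℕ :=
  F (v.2 + 1) v.1

lemma columnNetWeight_comm (A B C : Fin 4 → ℕ) (r : Fin 4) :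
    columnNetWeight A B C r = columnNetWeight C B A r := by
  rw [columnNetWeight, columnNetWeight, add_comm (A r - 1)]

variable {n k : ℕ} {F : ℕ → Fin 4 → ℕ}

lemma netWeight_weightOfColumns (h0 : F 0 = 0) (hn : F (n + 1) = 0) (v : Fin 4 × Fin n) :
    netWeight (cycleGraph 4 □ pathGraph n) (weightOfColumns n F) v =
      columnNetWeight (F v.2) (F (v.2 + 1)) (F (v.2 + 2)) v.1 := by
  rw [netWeight, sum_neighborFinset_boxProd, sum_neighborFinset_cycleGraph]
  simp only [weightOfColumns]
  rw [sum_neighborFinset_pathGraph (fun i => F i v.1 - 1) (by simp [h0]) (by simp [hn])]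
  rfl

lemma sum_weightOfColumns (n : ℕ) (F : ℕ → Fin 4 → ℕ) :
    ∑ v, weightOfColumns n F v = ∑ i ∈ range n, ∑ r, F (i + 1) r := by
  rw [Fintype.sum_prod_type_right, ← Fin.sum_univ_eq_sum_range (fun i => ∑ r, F (i + 1) r)]
  rfl

theorem kRoman_le_sum_columns (h0 : F 0 = 0) (hn : F (n + 1) = 0)
    (hF : ∀ i < n, ∀ r, k ≤ columnNetWeight (F i) (F (i + 1)) (F (i + 2)) r) :
    kRoman (cycleGraph 4 □ pathGraph n) k ≤ ∑ i ∈ range n, ∑ r, F (i + 1) r := by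
  rw [← sum_weightOfColumns]
  refine kRoman_le_sum_of_le_netWeight fun v => ?_
  rw [netWeight_weightOfColumns h0 hn]
  exact hF v.2 v.2.isLt v.1

lemma kRoman_cycleGraph_four_pathGraph_four_le {a b : ℕ} (ha : 1 ≤ a)
    (hend : k + 3 ≤ 3 * b + a) (hnext : k + 7 ≤ 4 * a + b) :
    kRoman (cycleGraph 4 □ pathGraph 4) k + 4 ≤ 8 * a + 8 * b := by
  let F : ℕ → Fin 4 → ℕ
    | 1 | 4 => ![b + 1, b, b, b]
    | 2 | 3 => ![a - 1, a - 1, a, a - 1]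
    | _ => 0
  have hF : ∀ i < 4, ∀ r, k ≤ columnNetWeight (F i) (F (i + 1)) (F (i + 2)) r := by
    intro i hi r
    interval_cases i <;> fin_cases r <;> simp [F, columnNetWeight] <;> omega
  have hsum : ∑ i ∈ range 4, ∑ r, F (i + 1) r + 4 = 8 * a + 8 * b := by
    simp only [F, sum_range_succ, range_one, sum_singleton, zero_add, Nat.reduceAdd,
      Fin.sum_univ_four, Matrix.cons_val]
    omega
  exact hsum ▸ Nat.add_le_add_right (kRoman_le_sum_columns rfl rfl hF) 4

lemma kRoman_cycleGraph_four_pathGraph_five_le {a b : ℕ} (ha : 2 ≤ a)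
    (hend : k + 3 ≤ 3 * b + a) (hnext : k + 7 ≤ 4 * a + b) (hmid : k + 5 ≤ 5 * a) :
    kRoman (cycleGraph 4 □ pathGraph 5) k + 4 ≤ 12 * a + 8 * b := by
  let F : ℕ → Fin 4 → ℕ
    | 1 | 5 => ![b + 1, b, b + 1, b]
    | 2 | 4 => ![a - 1, a - 2, a - 1, a - 2]
    | 3 => fun _ => a + 1
    | _ => 0
  have hF : ∀ i < 5, ∀ r, k ≤ columnNetWeight (F i) (F (i + 1)) (F (i + 2)) r := by
    intro i hi r
    interval_cases i <;> fin_cases r <;> simp [F, columnNetWeight] <;> omega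
  have hsum : ∑ i ∈ range 5, ∑ r, F (i + 1) r + 4 = 12 * a + 8 * b := by
    simp only [F, sum_range_succ, range_one, sum_singleton, zero_add, Nat.reduceAdd,
      Fin.sum_univ_four, Matrix.cons_val]
    omega
  exact hsum ▸ Nat.add_le_add_right (kRoman_le_sum_columns rfl rfl hF) 4

lemma kRoman_cycleGraph_four_pathGraph_five_le_of_even {h z : ℕ} (hz : h + 2 ≤ 3 * z) :
    kRoman (cycleGraph 4 □ pathGraph 5) (2 * h) ≤ 8 * h + 4 * z + 8 := by
  let F : ℕ → Fin 4 → ℕ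
    | 1 => ![0, 0, h + 1, h]
    | 2 => ![h + 2, h + 1, 0, 0]
    | 3 => fun _ => z
    | 4 => ![0, 0, h + 2, h + 1]
    | 5 => ![h + 1, h, 0, 0]
    | _ => 0
  have hF : ∀ i < 5, ∀ r, 2 * h ≤ columnNetWeight (F i) (F (i + 1)) (F (i + 2)) r := by
    intro i hi r
    interval_cases i <;> fin_cases r <;> simp [F, columnNetWeight] <;> omega
  refine (kRoman_le_sum_columns rfl rfl hF).trans_eq ?_
  simp only [F, sum_range_succ, range_one, sum_singleton, zero_add, Nat.reduceAdd,
    Fin.sum_univ_four, Matrix.cons_val]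
  omega

end Columns

section Zigzag

lemma fin_four_add_two_add_two (r : Fin 4) : r + 2 + 2 = r := by
  revert r
  decide

lemma fin_four_add_two_ne_self (r : Fin 4) : r + 2 ≠ r := by
  revert r
  decide

/-- The rows of the zigzag dominating set and of the zigzag packing of `C₄ □ Pₙ`: consecutive
values are antipodal in `C₄`. -/
def alternatingRow (t : ℕ) : Fin 4 :=
  if Even t then 2 else 0

lemma alternatingRow_succ (t : ℕ) : alternatingRow (t + 1) = alternatingRow t + 2 := by
  simp only [alternatingRow, Nat.even_add_one]
  split_ifs <;> rfl

lemma cycleGraph_four_boxProd_pathGraph_adj {n : ℕ} {u v : Fin 4 × Fin n} :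
    (cycleGraph 4 □ pathGraph n).Adj u v ↔
      (v.1 = u.1 - 1 ∨ v.1 = u.1 + 1) ∧ u.2 = v.2 ∨
        ((u.2 : ℕ) + 1 = v.2 ∨ (v.2 : ℕ) + 1 = u.2) ∧ u.1 = v.1 := by
  rw [boxProd_adj, pathGraph_adj, ← mem_neighborSet, cycleGraph_neighborSet, Set.mem_insert_iff,
    Set.mem_singleton_iff]

lemma mem_closedNbr_cycleGraph_four_boxProd_pathGraph {n : ℕ} {u v : Fin 4 × Fin n} :
    v ∈ closedNbr (cycleGraph 4 □ pathGraph n) u ↔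
      v.1 ≠ u.1 + 2 ∧ u.2 = v.2 ∨
        ((u.2 : ℕ) + 1 = v.2 ∨ (v.2 : ℕ) + 1 = u.2) ∧ u.1 = v.1 := by
  have hrow : ∀ r s : Fin 4, s ≠ r + 2 ↔ s = r ∨ s = r - 1 ∨ s = r + 1 := by decide
  rw [closedNbr, Set.mem_insert_iff, mem_neighborSet, cycleGraph_four_boxProd_pathGraph_adj, hrow,
    Prod.ext_iff]
  tauto

lemma disjoint_closedNbr_of_antipodal_rows {n : ℕ} {u v : Fin 4 × Fin n} (hrow : v.1 = u.1 + 2)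
    (hcol : (u.2 : ℕ) ≠ v.2) :
    Disjoint (closedNbr (cycleGraph 4 □ pathGraph n) u)
      (closedNbr (cycleGraph 4 □ pathGraph n) v) := by
  refine Set.disjoint_left.2 fun w hu hv => ?_
  rw [mem_closedNbr_cycleGraph_four_boxProd_pathGraph] at hu hv
  rw [hrow, fin_four_add_two_add_two] at hv
  have := fin_four_add_two_ne_self u.1
  grind

lemma disjoint_closedNbr_of_distant_columns {n : ℕ} {u v : Fin 4 × Fin n}
    (hcol : (u.2 : ℕ) + 3 ≤ v.2) :
    Disjoint (closedNbr (cycleGraph 4 □ pathGraph n) u)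
      (closedNbr (cycleGraph 4 □ pathGraph n) v) := by
  refine Set.disjoint_left.2 fun w hu hv => ?_
  rw [mem_closedNbr_cycleGraph_four_boxProd_pathGraph, Fin.ext_iff] at hu hv
  omega

lemma isDomSet_setOf_fst_eq_alternatingRow {n : ℕ} (hn : 2 ≤ n) :
    IsDomSet (cycleGraph 4 □ pathGraph n) {v | v.1 = alternatingRow v.2} := by
  rintro ⟨r, i⟩ hv
  by_cases hr : r = alternatingRow i + 2
  · obtain ⟨j, hj⟩ : ∃ j : Fin n, (j : ℕ) + 1 = i ∨ (i : ℕ) + 1 = j := by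
      obtain hi | hi := Nat.eq_zero_or_pos (i : ℕ)
      · exact ⟨⟨1, hn⟩, Or.inr (by simp [hi])⟩
      · exact ⟨⟨i - 1, by omega⟩, Or.inl (Nat.sub_add_cancel hi)⟩
    refine ⟨(r, j), ?_, cycleGraph_four_boxProd_pathGraph_adj.2 (Or.inr ⟨hj, rfl⟩)⟩
    change r = alternatingRow j
    obtain hj | hj := hj
    · rw [hr, ← hj, alternatingRow_succ, fin_four_add_two_add_two]
    · rw [hr, ← hj, alternatingRow_succ]
  · refine ⟨(alternatingRow i, i), rfl, ?_⟩
    have hmem : (r, i) ∈ closedNbr (cycleGraph 4 □ pathGraph n) (alternatingRow i, i) :=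
      mem_closedNbr_cycleGraph_four_boxProd_pathGraph.2 (Or.inl ⟨hr, rfl⟩)
    exact hmem.resolve_left fun h => hv (Prod.ext_iff.1 h).1

theorem kRoman_cycleGraph_four_pathGraph_le_mul {n : ℕ} (k : ℕ) (hn : 2 ≤ n) :
    kRoman (cycleGraph 4 □ pathGraph n) k ≤ (k + 1) * n := by
  have hcard : {v : Fin 4 × Fin n | v.1 = alternatingRow v.2}.ncard = n := by
    have hrange : {v : Fin 4 × Fin n | v.1 = alternatingRow v.2} =
        Set.range fun i : Fin n => (alternatingRow i, i) := by
      ext ⟨r, i⟩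
      simp [eq_comm]
    rw [hrange, Set.ncard_range_of_injective fun _ _ h => (Prod.ext_iff.1 h).2, Nat.card_fin]
  exact (kRoman_le_mul_ncard_of_isDomSet (isDomSet_setOf_fst_eq_alternatingRow hn)).trans_eq
    (by rw [hcard])

/-- The packing of `C₄ □ Pₙ` with one vertex in each of the columns `c, c + 1, c + 3, c + 4, …`
(columns counted from `0`), `T` vertices in total; for `c = 0` and `T = ⌈2n/3⌉` it is a maximum
packing. -/
def zigzagPacking (n c T : ℕ) : Set (Fin 4 × Fin n) :=
  {v | ∃ t < T, v.1 = alternatingRow t ∧ (v.2 : ℕ) = c + 3 * t / 2}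

lemma isPacking_zigzagPacking (n c T : ℕ) :
    IsPacking (cycleGraph 4 □ pathGraph n) (zigzagPacking n c T) := by
  rintro u ⟨t, ht, hr, hc⟩ u' ⟨t', ht', hr', hc'⟩ hne
  wlog h : t < t' generalizing u u' t t'
  · have htt' : t ≠ t' := by
      rintro rfl
      exact hne (Prod.ext (hr.trans hr'.symm) (Fin.ext (hc.trans hc'.symm)))
    exact (this t' ht' hr' hc' t ht hr hc hne.symm (by omega)).symm
  obtain rfl | hfar : t' = t + 1 ∨ t + 2 ≤ t' := by omega
  · exact disjoint_closedNbr_of_antipodal_rows (by rw [hr', hr, alternatingRow_succ]) (by omega)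
  · exact disjoint_closedNbr_of_distant_columns (by omega)

lemma ncard_zigzagPacking {n c T : ℕ} (h : c + (3 * T - 1) / 2 ≤ n) :
    (zigzagPacking n c T).ncard = T := by
  let f : Fin T → Fin 4 × Fin n := fun t => (alternatingRow t, ⟨c + 3 * t / 2, by omega⟩)
  have hf : Function.Injective f := by
    intro t t' htt'
    have : c + 3 * (t : ℕ) / 2 = c + 3 * t' / 2 := congrArg (fun v => (v.2 : ℕ)) htt'
    omega
  have hrange : zigzagPacking n c T = Set.range f := by
    ext v
    constructor
    · rintro ⟨t, ht, hr, hc⟩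
      exact ⟨⟨t, ht⟩, Prod.ext hr.symm (Fin.ext hc.symm)⟩
    · rintro ⟨t, rfl⟩
      exact ⟨t, t.2, rfl, rfl⟩
  rw [hrange, Set.ncard_range_of_injective hf, Nat.card_fin]

end Zigzag

section Tapered

/-- The extremal column of the tapered weight: `b`, raised by one opposite to the row `s`. -/
def endColumn (b : ℕ) (s r : Fin 4) : ℕ :=
  if r = s + 2 then b + 1 else b

/-- The column next to the extremal one in the tapered weight: `a`, lowered by one except in the
row `s`. -/
def nextColumn (a : ℕ) (s r : Fin 4) : ℕ :=
  if r = s then a else a - 1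

/-- The tapered weight on the columns `1, …, m + 4` of `C₄ □ Pₘ₊₄`: it is `b` on the two extremal
columns and `a` inside, up to a saving of two units at each end, where `s` and `t` are the rows left
unchanged next to the left and to the right end. -/
def taperedColumn (a b m : ℕ) (s t : Fin 4) : ℕ → Fin 4 → ℕ
  | 0 => 0
  | 1 => endColumn b s
  | 2 => nextColumn a s
  | i + 3 =>
    if i < m then fun _ => a
    else if i = m then nextColumn a t
    else if i = m + 1 then endColumn b t
    else 0

variable {a b k : ℕ}

lemma sum_endColumn (b : ℕ) (s : Fin 4) : ∑ r, endColumn b s r = 4 * b + 1 := by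
  simp only [endColumn, Fin.sum_univ_four]
  fin_cases s <;> simp <;> omega

lemma sum_nextColumn (ha : 1 ≤ a) (s : Fin 4) : ∑ r, nextColumn a s r + 3 = 4 * a := by
  simp only [nextColumn, Fin.sum_univ_four]
  fin_cases s <;> simp <;> omega

lemma le_columnNetWeight_endColumn (h : k + 3 ≤ 3 * b + a) (s r : Fin 4) :
    k ≤ columnNetWeight 0 (endColumn b s) (nextColumn a s) r := by
  have hneg : (-1 : Fin 4) = 3 := rfl
  fin_cases s <;> fin_cases r <;> simp [columnNetWeight, endColumn, nextColumn, hneg] <;> omega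

lemma le_columnNetWeight_nextColumn (h : k + 6 ≤ 4 * a + b) (s r : Fin 4) :
    k ≤ columnNetWeight (endColumn b s) (nextColumn a s) (fun _ => a) r := by
  have hneg : (-1 : Fin 4) = 3 := rfl
  fin_cases s <;> fin_cases r <;> simp [columnNetWeight, endColumn, nextColumn, hneg] <;> omega

lemma le_columnNetWeight_const_of_nextColumn (h : k + 5 ≤ 5 * a) (s r : Fin 4) :
    k ≤ columnNetWeight (nextColumn a s) (fun _ => a) (fun _ => a) r := by
  simp only [columnNetWeight, nextColumn]
  split_ifs <;> omega

lemma lt_columnNetWeight_const_of_nextColumn (h : k + 5 ≤ 5 * a) (s : Fin 4) :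
    k < columnNetWeight (nextColumn a s) (fun _ => a) (fun _ => a) s := by
  simp only [columnNetWeight, nextColumn, if_true]
  omega

lemma lt_columnNetWeight_const (h : k + 5 ≤ 5 * a) (r : Fin 4) :
    k < columnNetWeight (fun _ => a) (fun _ => a) (fun _ => a) r := by
  simp only [columnNetWeight]
  omega

variable {m : ℕ} {s t : Fin 4}

lemma taperedColumn_of_le {i : ℕ} (h : 3 ≤ i) (h' : i < m + 3) :
    taperedColumn a b m s t i = fun _ => a := by
  obtain ⟨i, rfl⟩ := Nat.exists_eq_add_of_le' h
  exact if_pos (by omega)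

lemma taperedColumn_add_three : taperedColumn a b m s t (m + 3) = nextColumn a t := by
  simp [taperedColumn]

lemma taperedColumn_add_four : taperedColumn a b m s t (m + 4) = endColumn b t := by
  simp [taperedColumn]

lemma taperedColumn_add_five : taperedColumn a b m s t (m + 5) = 0 := by
  simp [taperedColumn]

lemma sum_taperedColumn (b m : ℕ) (s t : Fin 4) (ha : 1 ≤ a) :
    ∑ i ∈ range (m + 4), ∑ r, taperedColumn a b m s t (i + 1) r + 4 =
      4 * ((m + 2) * a) + 8 * b := by
  have hmid : ∑ i ∈ range m, ∑ r, taperedColumn a b m s t (i + 3) r = m * (4 * a) := by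
    refine (sum_congr rfl fun i hi => ?_).trans (by rw [sum_const, card_range, smul_eq_mul])
    rw [taperedColumn_of_le (by omega) (by simpa using hi), Fin.sum_const, smul_eq_mul]
  have hs := sum_nextColumn ha s
  have ht := sum_nextColumn ha t
  rw [sum_range_succ, sum_range_succ, sum_range_succ', sum_range_succ', taperedColumn_add_three,
    taperedColumn_add_four, hmid, sum_endColumn]
  simp only [taperedColumn, sum_endColumn]
  linarith

lemma le_columnNetWeight_taperedColumn (hend : k + 3 ≤ 3 * b + a) (hnext : k + 6 ≤ 4 * a + b)
    (hmid : k + 5 ≤ 5 * a) {i : ℕ} (hi : i < m + 6) (r : Fin 4) :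
    k ≤ columnNetWeight (taperedColumn a b (m + 2) s t i) (taperedColumn a b (m + 2) s t (i + 1))
      (taperedColumn a b (m + 2) s t (i + 2)) r := by
  obtain rfl | rfl | rfl | ⟨h, h'⟩ | rfl | rfl | rfl : i = 0 ∨ i = 1 ∨ i = 2 ∨ (3 ≤ i ∧ i < m + 3) ∨
      i = m + 3 ∨ i = m + 4 ∨ i = m + 5 := by omega
  · exact le_columnNetWeight_endColumn hend s r
  · rw [taperedColumn_of_le (i := 1 + 2) (by omega) (by omega)]
    exact le_columnNetWeight_nextColumn hnext s r
  · rw [taperedColumn_of_le (i := 2 + 1) (by omega) (by omega),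
      taperedColumn_of_le (i := 2 + 2) (by omega) (by omega)]
    exact le_columnNetWeight_const_of_nextColumn hmid s r
  · rw [taperedColumn_of_le h (by omega), taperedColumn_of_le (by omega) (by omega),
      taperedColumn_of_le (by omega) (by omega)]
    exact (lt_columnNetWeight_const hmid r).le
  · rw [taperedColumn_of_le (by omega) (by omega), taperedColumn_of_le (by omega) (by omega),
      taperedColumn_add_three, columnNetWeight_comm]
    exact le_columnNetWeight_const_of_nextColumn hmid t r
  · rw [taperedColumn_of_le (by omega) (by omega), taperedColumn_add_three,
      taperedColumn_add_four, columnNetWeight_comm]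
    exact le_columnNetWeight_nextColumn hnext t r
  · rw [taperedColumn_add_three, taperedColumn_add_four, taperedColumn_add_five,
      columnNetWeight_comm]
    exact le_columnNetWeight_endColumn hend t r

lemma lt_columnNetWeight_taperedColumn (hmid : k + 5 ≤ 5 * a) {i : ℕ} {r : Fin 4} (hi : 2 ≤ i)
    (hi' : i ≤ m + 3) (hs : i = 2 → r = s) (ht : i = m + 3 → r = t) :
    k < columnNetWeight (taperedColumn a b (m + 2) s t i) (taperedColumn a b (m + 2) s t (i + 1))
      (taperedColumn a b (m + 2) s t (i + 2)) r := by
  obtain rfl | ⟨h, h'⟩ | rfl : i = 2 ∨ (3 ≤ i ∧ i < m + 3) ∨ i = m + 3 := by omega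
  · rw [taperedColumn_of_le (i := 2 + 1) (by omega) (by omega),
      taperedColumn_of_le (i := 2 + 2) (by omega) (by omega), hs rfl]
    exact lt_columnNetWeight_const_of_nextColumn hmid s
  · rw [taperedColumn_of_le h (by omega), taperedColumn_of_le (by omega) (by omega),
      taperedColumn_of_le (by omega) (by omega)]
    exact lt_columnNetWeight_const hmid r
  · rw [taperedColumn_of_le (by omega) (by omega), taperedColumn_of_le (by omega) (by omega),
      taperedColumn_add_three, columnNetWeight_comm, ht rfl]
    exact lt_columnNetWeight_const_of_nextColumn hmid t

lemma kRoman_cycleGraph_four_pathGraph_le_of_six_le {n : ℕ} (hn : 6 ≤ n)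
    (hend : k + 3 ≤ 3 * b + a) (hnext : k + 6 ≤ 4 * a + b) (hmid : k + 5 ≤ 5 * a) :
    kRoman (cycleGraph 4 □ pathGraph n) k + (2 * n + 2) / 3 ≤ 4 * ((n - 2) * a) + 8 * b := by
  obtain ⟨m, rfl⟩ := Nat.exists_eq_add_of_le' hn
  obtain ⟨T, hT⟩ : ∃ T, T = (2 * m + 2) / 3 := ⟨_, rfl⟩
  set F := taperedColumn a b (m + 2) (alternatingRow 0) (alternatingRow (T - 1)) with hF
  have hF' : F (m + 6 + 1) = 0 := taperedColumn_add_five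
  have hpacked : kRoman (cycleGraph 4 □ pathGraph (m + 6)) k + (zigzagPacking (m + 6) 3 T).ncard ≤
      ∑ v, weightOfColumns (m + 6) F v := by
    refine kRoman_add_ncard_le_sum_of_isPacking (isPacking_zigzagPacking _ _ _) ?_ (fun v => ?_) ?_
    · rintro v ⟨t, ht, -, hc⟩
      rw [weightOfColumns, hF, taperedColumn_of_le (by omega) (by omega)]
      exact (by omega : 0 < a)
    · rw [netWeight_weightOfColumns rfl hF']
      exact le_columnNetWeight_taperedColumn hend hnext hmid v.2.isLt v.1
    · rintro u ⟨t, ht, hr, hc⟩ v hv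
      rw [mem_closedNbr_cycleGraph_four_boxProd_pathGraph, Fin.ext_iff] at hv
      rw [netWeight_weightOfColumns rfl hF']
      refine lt_columnNetWeight_taperedColumn hmid (by omega) (by omega) (fun h => ?_) fun h => ?_
      · obtain rfl : t = 0 := by omega
        rw [← hr]
        omega
      · obtain rfl : t = T - 1 := by omega
        rw [← hr]
        omega
  rw [ncard_zigzagPacking (by omega), sum_weightOfColumns] at hpacked
  have hsum : ∑ i ∈ range (m + 6), ∑ r, F (i + 1) r + 4 = 4 * ((m + 2 + 2) * a) + 8 * b :=
    sum_taperedColumn b (m + 2) _ _ (by omega)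
  rw [show m + 6 - 2 = m + 2 + 2 by omega]
  omega

end Tapered

section Bound

variable {k n a b : ℕ}

lemma kRoman_cycleGraph_four_pathGraph_add_le (hn : 4 ≤ n) (ha : k + 5 ≤ 5 * a)
    (ha' : 5 * a ≤ k + 9) (hb : k + 3 ≤ 3 * b + a) (hb' : 3 * b + a ≤ k + 5) :
    kRoman (cycleGraph 4 □ pathGraph n) k + (2 * n + 2) / 3 ≤ 4 * ((n - 2) * a) + 8 * b := by
  have hdom := kRoman_cycleGraph_four_pathGraph_le_mul k (by omega : 2 ≤ n)
  obtain rfl | rfl | hn6 : n = 4 ∨ n = 5 ∨ 6 ≤ n := by omega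
  · by_cases hnext : k + 7 ≤ 4 * a + b
    · have := kRoman_cycleGraph_four_pathGraph_four_le (by omega) hb hnext
      omega
    · omega
  · by_cases hnext : k + 7 ≤ 4 * a + b ∧ 2 ≤ a
    · have := kRoman_cycleGraph_four_pathGraph_five_le hnext.2 hb hnext.1 ha
      omega
    · obtain rfl | hk : k = 20 ∨ k < 20 := by omega
      · have : kRoman (cycleGraph 4 □ pathGraph 5) 20 ≤ 104 :=
          kRoman_cycleGraph_four_pathGraph_five_le_of_even (h := 10) (z := 4) le_rfl
        omega
      · omega
  · by_cases hnext : k + 6 ≤ 4 * a + b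
    · exact kRoman_cycleGraph_four_pathGraph_le_of_six_le hn6 hb hnext ha
    · obtain ⟨rfl, rfl, rfl⟩ | ⟨rfl, rfl, rfl⟩ :
          (k = 0 ∧ a = 1 ∧ b = 1) ∨ (k = 5 ∧ a = 2 ∧ b = 2) := by omega
      all_goals omega

lemma four_mul_add_eight_mul_sub_le (hn : 4 ≤ n) (ha : 5 * a ≤ k + 9) (hb : 3 * b + a ≤ k + 5)
    {c : ℚ} (hc : 2 * n / 3 ≤ c) :
    4 * ((n : ℚ) - 2) * a + 8 * b - c ≤ (12 * n * k + 8 * k + 110 * n - 40) / 15 := by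
  qify at hn ha hb
  have hcoeff : 0 ≤ 4 * ((n : ℚ) - 2) - 8 / 3 := by linarith
  have := mul_le_mul_of_nonneg_left ha hcoeff
  linarith

lemma ceil_div_eq_of_le_mul_of_mul_lt_add {K : Type*} [Field K] [LinearOrder K]
    [IsStrictOrderedRing K] [FloorRing K] {x d : K} {q : ℤ} (h : x ≤ d * q) (h' : d * q < x + d) :
    ⌈x / d⌉ = q := by
  have hd : 0 < d := by linarith
  rw [Int.ceil_eq_iff, lt_div_iff₀ hd, div_le_iff₀ hd]
  constructor <;> linarith

end Bound

theorem stmt19 (n k : ℕ) (hn : 4 ≤ n) (hk : 1 ≤ k) :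
    (kRoman ((cycleGraph 4).boxProd (pathGraph n)) k : ℚ) ≤
        4 * ((n : ℚ) - 2) * ⌈((k : ℚ) + 5) / 5⌉ +
          8 * ⌈((k : ℚ) + 3 - ⌈((k : ℚ) + 5) / 5⌉) / 3⌉ - ⌈(2 * n : ℚ) / 3⌉ ∧
      4 * ((n : ℚ) - 2) * ⌈((k : ℚ) + 5) / 5⌉ +
          8 * ⌈((k : ℚ) + 3 - ⌈((k : ℚ) + 5) / 5⌉) / 3⌉ - ⌈(2 * n : ℚ) / 3⌉ ≤
        (12 * n * k + 8 * k + 110 * n - 40) / 15 := by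
  obtain ⟨a, ha, ha'⟩ : ∃ a : ℕ, k + 5 ≤ 5 * a ∧ 5 * a ≤ k + 9 := ⟨(k + 9) / 5, by omega, by omega⟩
  obtain ⟨b, hb, hb'⟩ : ∃ b : ℕ, k + 3 ≤ 3 * b + a ∧ 3 * b + a ≤ k + 5 :=
    ⟨(k + 5 - a) / 3, by omega, by omega⟩
  obtain ⟨c, hc⟩ : ∃ c : ℕ, c = (2 * n + 2) / 3 := ⟨_, rfl⟩
  have hkRoman := kRoman_cycleGraph_four_pathGraph_add_le hn ha ha' hb hb'
  rw [← hc] at hkRoman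
  obtain ⟨hc, hc'⟩ : 2 * n ≤ 3 * c ∧ 3 * c ≤ 2 * n + 2 := by omega
  have hceil_a : ⌈((k : ℚ) + 5) / 5⌉ = a := by
    qify at ha ha'
    apply ceil_div_eq_of_le_mul_of_mul_lt_add <;> push_cast <;> linarith
  have hceil_b : ⌈((k : ℚ) + 3 - a) / 3⌉ = b := by
    qify at hb hb'
    apply ceil_div_eq_of_le_mul_of_mul_lt_add <;> push_cast <;> linarith
  have hceil_c : ⌈(2 * n : ℚ) / 3⌉ = c := by
    qify at hc hc'
    apply ceil_div_eq_of_le_mul_of_mul_lt_add <;> push_cast <;> linarith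
  rw [hceil_a, Int.cast_natCast, hceil_b, hceil_c, Int.cast_natCast, Int.cast_natCast]
  constructor
  · qify [(by omega : 2 ≤ n)] at hkRoman
    linarith
  · qify at hc
    exact four_mul_add_eight_mul_sub_le hn ha' hb' (by linarith)
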